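/- Suppose K is a convex body with (1 − δ)Δ_n ⊂ K ⊂ Δ_n for some small δ > 0, and let P, P', Q, Q' be the (generally non-convex) polytopes built from the tangency points x_F, x_F^*, y_F, y_F^* over all flags of faces of Δ_n. Then there exist constants C₁ = C₁(n) and C₂ = C₂(n) such that |vol(P) − vol(Q)| ≤ C₁δ² and |vol(P') − vol(Q')| ≤ C₂δ². -/

import Mathlib

/-!
Normalise the rays by replacing each centroid by the vertex sum `vsum v s = ∑ i ∈ s, v i` of the
face: both `c_F` and the centroid of the dual face are positive multiples of it, with factors
depending only on `dim F` (`centroidOf_eq`, `dualCentroid_eq`). Hence both inequalities are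
instances of one estimate on flag polytopes whose rays are small perturbations
`t F • vsum v F + z F` with `z F` orthogonal to `vsum v F`.

Volume. The cones over the flags form a complete simplicial fan (the barycentric subdivision). The
coefficients of a point in this fan are Lipschitz functions of the point (`coef_sub_le`), so the
fan survives a small perturbation of its rays (`coef_eq_of_sum_eq`). The simplices of a perturbed
flag polytope therefore do not overlap, and its volume is a fixed constant times
`∑ |det (u (g k))_k|` over the flags `g` (`volume_flagPolytope`); close to the unperturbed
configuration the signs of the determinants are constant (`exists_sign_stable`).

First order. Expand the determinants around the vertex sums. The first-order effect of moving the
ray of a single face `s` is a linear functional, summed over all flags through `s`. The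
reflections exchanging two vertices that both lie in `s`, or both lie outside `s`, permute these
flags, so the functional is constant on the vertices of `s` and on the remaining vertices
(`firstOrder_vertex`). Since the vertices form a tight frame with sum zero, such a functional
vanishes on the orthogonal complement of `vsum v s` (`firstOrder_eq_zero`), so the displacements
`z F` contribute nothing to first order, and `exists_second_order_bound` controls the rest.

Tangency. Comparing `K` with `Δ` and `(1 - δ) Δ`, and `K°` with their polars, shows that
`t = 1 + O(δ)` and that `z = x_F - t c_F` is orthogonal to the face and satisfies one-sided bounds
`⟪v j, z⟫ ≥ -O(δ)` (in the dual case `≤ O(δ)`); the numbers `⟪v j, z⟫` have sum zero, so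
`‖z‖ = O(δ)` (`tangency_close`, `dual_tangency_close`).
-/

open MeasureTheory Metric Set Pointwise RealInnerProductSpace

noncomputable section

abbrev Euc (n : ℕ) : Type := EuclideanSpace ℝ (Fin n)

/-- A convex body: a compact convex set with nonempty interior. -/
def IsConvexBody {n : ℕ} (K : Set (Euc n)) : Prop :=
  IsCompact K ∧ Convex ℝ K ∧ (interior K).Nonempty

/-- The polar body of `K` with center of polarity `z`. -/
def polarAt {n : ℕ} (K : Set (Euc n)) (z : Euc n) : Set (Euc n) :=
  {y | ∀ x ∈ K, ⟪y, x - z⟫ ≤ 1}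

/-- `z` is the Santaló point of `K`: the interior point minimizing the volume
of the polar body `K^z`. -/
def IsSantaloPoint {n : ℕ} (K : Set (Euc n)) (z : Euc n) : Prop :=
  z ∈ interior K ∧ ∀ w ∈ interior K, volume (polarAt K z) ≤ volume (polarAt K w)

/-- `v` lists the vertices of a regular simplex inscribed in the unit sphere:
unit vectors with pairwise inner products `−1/n`. -/
def IsRegularSimplex {n : ℕ} (v : Fin (n + 1) → Euc n) : Prop :=
  (∀ i, ‖v i‖ = 1) ∧ ∀ i j, i ≠ j → ⟪v i, v j⟫ = -(1 / (n : ℝ))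

/-- The simplex with vertex set `v`. -/
def simplexHull {n : ℕ} (v : Fin (n + 1) → Euc n) : Set (Euc n) :=
  convexHull ℝ (Set.range v)

/-- The face of the simplex spanned by the vertices indexed by `s`. -/
def faceOf {n : ℕ} (v : Fin (n + 1) → Euc n) (s : Finset (Fin (n + 1))) : Set (Euc n) :=
  convexHull ℝ (v '' ↑s)

/-- The centroid of the face spanned by the vertices indexed by `s`. -/
def centroidOf {n : ℕ} (v : Fin (n + 1) → Euc n) (s : Finset (Fin (n + 1))) : Euc n :=
  (s.card : ℝ)⁻¹ • ∑ i ∈ s, v i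

/-- `F^⊥ = {y : ⟨x, y⟩ = 0 for all x ∈ F}`. -/
def perpOf {n : ℕ} (F : Set (Euc n)) : Set (Euc n) :=
  {y | ∀ x ∈ F, ⟪x, y⟫ = 0}

/-- The dual face `F^* = {y ∈ Δₙ° : ⟨x, y⟩ = 1 for all x ∈ F}` of the face of the
simplex indexed by `s`. -/
def dualFace {n : ℕ} (v : Fin (n + 1) → Euc n) (s : Finset (Fin (n + 1))) : Set (Euc n) :=
  {y ∈ polarAt (simplexHull v) 0 | ∀ x ∈ faceOf v s, ⟪x, y⟫ = 1}

/-- The centroid `c_{F^*} = c_F / ‖c_F‖²` of the dual face. -/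
def dualCentroid {n : ℕ} (v : Fin (n + 1) → Euc n) (s : Finset (Fin (n + 1))) : Euc n :=
  (‖centroidOf v s‖ ^ 2)⁻¹ • centroidOf v s

/-- `x` is a tangency point of the family of affine subspaces `t'·c + F^⊥` with the
body `K`: the parameter `t` is maximal so that `t·c + F^⊥` meets `K`, and
`x ∈ (t·c + F^⊥) ∩ ∂K`. -/
def IsTangency {n : ℕ} (F : Set (Euc n)) (c : Euc n) (K : Set (Euc n))
    (t : ℝ) (x : Euc n) : Prop :=
  0 < t ∧ x ∈ frontier K ∧ x ∈ (t • c) +ᵥ perpOf F ∧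
    ∀ t' : ℝ, (((t' • c) +ᵥ perpOf F) ∩ K).Nonempty → t' ≤ t

/-- A flag of faces `F₀ ⊂ F₁ ⊂ ⋯ ⊂ F_{n−1}` of the simplex, recorded by the
index sets of their vertices: `g k` has `k+1` elements and the sets increase. -/
def IsFlag {n : ℕ} (g : Fin n → Finset (Fin (n + 1))) : Prop :=
  (∀ k : Fin n, (g k).card = (k : ℕ) + 1) ∧ ∀ j k : Fin n, j ≤ k → g j ⊆ g k

/-- The union, over all flags, of the convex hulls of `0` together with the
points `w(F₀), …, w(F_{n−1})` assigned to the faces of the flag. -/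
def flagPolytope {n : ℕ} (w : Finset (Fin (n + 1)) → Euc n) : Set (Euc n) :=
  ⋃ g ∈ {g : Fin n → Finset (Fin (n + 1)) | IsFlag g},
    convexHull ℝ (insert 0 (Set.range fun k : Fin n => w (g k)))

/-! ### The frame of simplex vertices -/

/-- The vertex sum `∑ i ∈ s, v i`, a positive multiple of the centroid of the face `s`. -/
def vsum {n : ℕ} (v : Fin (n + 1) → Euc n) (s : Finset (Fin (n + 1))) : Euc n := ∑ i ∈ s, v i

section Frame

variable {n : ℕ} {v : Fin (n + 1) → Euc n}

lemma inner_vertex (hv : IsRegularSimplex v) (i j : Fin (n + 1)) :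
    ⟪v i, v j⟫ = (1 + 1 / (n : ℝ)) * (if i = j then 1 else 0) - 1 / (n : ℝ) := by
  split_ifs with h
  · subst h
    rw [real_inner_self_eq_norm_sq, hv.1 i]; ring
  · rw [hv.2 i j h]; ring

lemma inner_vsum (hv : IsRegularSimplex v) (i : Fin (n + 1)) (s : Finset (Fin (n + 1))) :
    ⟪v i, vsum v s⟫ = (1 + 1 / (n : ℝ)) * (if i ∈ s then 1 else 0) - s.card / (n : ℝ) := by
  simp only [vsum, inner_sum, inner_vertex hv, Finset.sum_sub_distrib, ← Finset.mul_sum]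
  simp [div_eq_mul_inv]

lemma sum_vertex (hn : 0 < n) (hv : IsRegularSimplex v) : ∑ i, v i = 0 := by
  have hn' : (n : ℝ) ≠ 0 := by positivity
  have h : ∀ i, ⟪v i, vsum v Finset.univ⟫ = 0 := by
    intro i
    rw [inner_vsum hv]
    simp
    field_simp
    ring
  have h2 : ⟪vsum v Finset.univ, vsum v Finset.univ⟫ = 0 := by
    nth_rewrite 1 [vsum]
    rw [sum_inner]
    exact Finset.sum_eq_zero fun i _ => h i
  exact inner_self_eq_zero.1 h2

lemma sum_inner_vertex (hn : 0 < n) (hv : IsRegularSimplex v) (z : Euc n) :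
    ∑ i, ⟪v i, z⟫ = 0 := by
  rw [← sum_inner, sum_vertex hn hv, inner_zero_left]

lemma span_vertex (hv : IsRegularSimplex v) :
    Submodule.span ℝ (Set.range v) = ⊤ := by
  have hli : LinearIndependent ℝ (fun k : Fin n => v k.castSucc) := by
    rw [Fintype.linearIndependent_iff]
    intro c hc i
    have h1 : ⟪v i.castSucc - v (Fin.last n), ∑ k : Fin n, c k • v k.castSucc⟫
        = (1 + 1 / (n : ℝ)) * c i := by
      simp only [inner_sum, inner_smul_right, inner_sub_left, inner_vertex hv]
      rw [Finset.sum_eq_single i]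
      · have : ¬ Fin.last n = i.castSucc := (Fin.castSucc_lt_last i).ne'
        simp [this]; ring
      · intro k _ hk
        have h1 : ¬ Fin.last n = k.castSucc := (Fin.castSucc_lt_last k).ne'
        have h2 : ¬ i = k := fun h => hk h.symm
        simp [h1, h2]
      · simp
    rw [hc, inner_zero_right] at h1
    have : (0 : ℝ) < 1 + 1 / n := by positivity
    rcases mul_eq_zero.1 h1.symm with h | h
    · exact absurd h this.ne'
    · exact h
  have := hli.span_eq_top_of_card_eq_finrank' (by simp)
  rw [eq_top_iff, ← this]
  apply Submodule.span_mono
  rintro _ ⟨k, rfl⟩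
  exact ⟨_, rfl⟩

/-- The vertices of a regular simplex form a tight frame. -/
lemma frame_vertex (hn : 0 < n) (hv : IsRegularSimplex v) (z : Euc n) :
    (1 + 1 / (n : ℝ)) • z = ∑ i, ⟪v i, z⟫ • v i := by
  rw [← sub_eq_zero]
  set y := (1 + 1 / (n : ℝ)) • z - ∑ i, ⟪v i, z⟫ • v i with hy
  have h : ∀ j, ⟪v j, y⟫ = 0 := by
    intro j
    rw [hy, inner_sub_right, inner_smul_right, inner_sum]
    simp only [inner_smul_right, inner_vertex hv, mul_sub, Finset.sum_sub_distrib,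
      ← Finset.sum_mul, sum_inner_vertex hn hv]
    simp
    ring
  have h2 : ∀ w ∈ Submodule.span ℝ (Set.range v), ⟪w, y⟫ = 0 := by
    intro w hw
    induction hw using Submodule.span_induction with
    | mem x hx => obtain ⟨j, rfl⟩ := hx; exact h j
    | zero => simp
    | add a b _ _ ha hb => rw [inner_add_left, ha, hb, add_zero]
    | smul a x _ hx => rw [inner_smul_left, hx, mul_zero]
  exact inner_self_eq_zero.1 (h2 y (by rw [span_vertex hv]; trivial))

/-- Since the numbers `⟪v j, z⟫` add up to zero, a one-sided bound on them bounds `z`. -/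
lemma norm_le_of_inner_ge (hn : 0 < n) (hv : IsRegularSimplex v) (z : Euc n) (ε : ℝ)
    (h : ∀ j, -ε ≤ ⟪v j, z⟫) : ‖z‖ ≤ (n + 1) * n * ε := by
  have h1 : ∀ j, |⟪v j, z⟫| ≤ n * ε := by
    intro j
    have hε : 0 ≤ ε := by
      have : ∑ j : Fin (n + 1), -ε ≤ ∑ j, ⟪v j, z⟫ := Finset.sum_le_sum fun j _ => h j
      rw [sum_inner_vertex hn hv] at this
      simp at this
      by_contra hlt
      push Not at hlt
      nlinarith [(Nat.cast_nonneg n : (0 : ℝ) ≤ n)]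
    have hn1 : (1 : ℝ) ≤ n := by exact_mod_cast hn
    rw [abs_le]
    constructor
    · nlinarith [h j]
    · have h3 := sum_inner_vertex hn hv z
      rw [← Finset.add_sum_erase _ _ (Finset.mem_univ j)] at h3
      have h4 : ∑ i ∈ Finset.univ.erase j, -ε ≤ ∑ i ∈ Finset.univ.erase j, ⟪v i, z⟫ :=
        Finset.sum_le_sum fun j _ => h j
      rw [Finset.sum_const, Finset.card_erase_of_mem (Finset.mem_univ j)] at h4
      simp only [Finset.card_univ, Fintype.card_fin, Nat.add_sub_cancel, nsmul_eq_mul] at h4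
      linarith
  have h2 : ‖(1 + 1 / (n : ℝ)) • z‖ ≤ (n + 1) * (n * ε) := by
    rw [frame_vertex hn hv]
    refine (norm_sum_le _ _).trans ?_
    have : ∑ i : Fin (n + 1), ‖⟪v i, z⟫ • v i‖ ≤ ∑ i : Fin (n + 1), n * ε := by
      apply Finset.sum_le_sum
      intro i _
      rw [norm_smul, hv.1 i, mul_one]
      exact h1 i
    simpa using this
  rw [norm_smul, Real.norm_of_nonneg (by positivity)] at h2
  have h3 : ‖z‖ ≤ (1 + 1 / (n : ℝ)) * ‖z‖ := by
    have : 0 ≤ 1 / (n : ℝ) := by positivity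
    nlinarith [norm_nonneg z]
  linarith

end Frame

/-! ### Stability of flag cones -/

/-- The coefficient of the face `s` in a combination `∑ k, b k • u (g k)` along a flag `g`. -/
def coef {n : ℕ} (g : Fin n → Finset (Fin (n + 1))) (b : Fin n → ℝ)
    (s : Finset (Fin (n + 1))) : ℝ := ∑ k, if g k = s then b k else 0

section Stability

variable {n : ℕ} {v : Fin (n + 1) → Euc n} {g h : Fin n → Finset (Fin (n + 1))}

lemma IsFlag.injective (hg : IsFlag g) : Function.Injective g := by
  intro j k hjk
  have := hg.1 j
  rw [hjk, hg.1 k] at this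
  exact Fin.ext (by omega)

lemma coef_apply (hg : IsFlag g) (b : Fin n → ℝ) (k : Fin n) : coef g b (g k) = b k := by
  rw [coef, Finset.sum_eq_single k]
  · simp
  · intro m _ hm
    rw [if_neg fun h => hm (hg.injective h)]
  · simp

lemma coef_eq_zero (b : Fin n → ℝ) {s : Finset (Fin (n + 1))} (hs : ∀ k, g k ≠ s) :
    coef g b s = 0 := Finset.sum_eq_zero fun k _ => if_neg (hs k)

lemma coef_nonneg {b : Fin n → ℝ} (hb : ∀ k, 0 ≤ b k) (s : Finset (Fin (n + 1))) :
    0 ≤ coef g b s := Finset.sum_nonneg fun k _ => by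
  split_ifs
  exacts [hb k, le_rfl]

lemma sum_coef_smul (b : Fin n → ℝ) (u : Finset (Fin (n + 1)) → Euc n) :
    ∑ s, coef g b s • u s = ∑ k, b k • u (g k) := by
  simp only [coef, Finset.sum_smul]
  rw [Finset.sum_comm]
  refine Finset.sum_congr rfl fun k _ => ?_
  rw [Finset.sum_eq_single (g k)]
  · simp
  · intro s _ hs
    rw [if_neg fun h => hs h.symm, zero_smul]
  · simp

lemma inner_sub_sum (hv : IsRegularSimplex v) (b : Fin n → ℝ) (i j : Fin (n + 1)) :
    ⟪v i - v j, ∑ k, b k • vsum v (g k)⟫ = (1 + 1 / (n : ℝ)) *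
      ∑ k, b k * ((if i ∈ g k then 1 else 0) - (if j ∈ g k then 1 else 0)) := by
  rw [inner_sum, Finset.mul_sum]
  refine Finset.sum_congr rfl fun k _ => ?_
  rw [inner_smul_right, inner_sub_left, inner_vsum hv, inner_vsum hv]
  ring

/-- Each `⟪v i - v j, ·⟫` with `i` in and `j` outside a face of the flag bounds the coefficient
of that face from above. -/
lemma coef_le_inner (hv : IsRegularSimplex v) (hg : IsFlag g) {b : Fin n → ℝ}
    (hb : ∀ k, 0 ≤ b k) (k : Fin n) {i j : Fin (n + 1)} (hi : i ∈ g k) (hj : j ∉ g k) :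
    (1 + 1 / (n : ℝ)) * b k ≤ ⟪v i - v j, ∑ k, b k • vsum v (g k)⟫ := by
  rw [inner_sub_sum hv]
  refine mul_le_mul_of_nonneg_left ?_ (by positivity)
  have h1 : ∀ m, 0 ≤ b m * (((if i ∈ g m then 1 else 0) : ℝ) - (if j ∈ g m then 1 else 0)) := by
    intro m
    refine mul_nonneg (hb m) ?_
    rcases le_total m k with hmk | hmk
    · have : j ∉ g m := fun h => hj (hg.2 m k hmk h)
      simp only [this, if_false]
      split_ifs <;> norm_num
    · have : i ∈ g m := hg.2 k m hmk hi
      simp only [this, if_true]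
      split_ifs <;> norm_num
  have h2 := Finset.single_le_sum (fun m _ => h1 m) (Finset.mem_univ k)
  simpa [hi, hj] using h2

/-- For a suitable pair `i ∈ s`, `j ∉ s`, and a point in any flag cone, `⟪v i - v j, ·⟫` bounds
the coefficient of `s` from below. With `coef_le_inner` this makes the coefficient of `s` the
minimum of these functionals on the cones having `s` as a ray. -/
lemma exists_inner_le_coef (hv : IsRegularSimplex v) (hh : IsFlag h) {b : Fin n → ℝ}
    (hb : ∀ k, 0 ≤ b k) {s : Finset (Fin (n + 1))} (hs : 0 < s.card) (hs' : s.card ≤ n) :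
    ∃ i ∈ s, ∃ j ∉ s,
      ⟪v i - v j, ∑ k, b k • vsum v (h k)⟫ ≤ (1 + 1 / (n : ℝ)) * coef h b s := by
  obtain ⟨k, hk⟩ : ∃ k : Fin n, s.card = k + 1 := ⟨⟨s.card - 1, by omega⟩, by simp only; omega⟩
  -- with `i` outside all earlier and `j` inside all later faces, only the `k`-th term of
  -- `inner_sub_sum` can be positive
  have key : ∀ i j, (∀ m < k, i ∉ h m) → (∀ m, k < m → j ∈ h m) →
      ⟪v i - v j, ∑ k, b k • vsum v (h k)⟫ ≤ (1 + 1 / (n : ℝ)) *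
        (b k * ((if i ∈ h k then 1 else 0) - (if j ∈ h k then 1 else 0))) := by
    intro i j hi hj
    rw [inner_sub_sum hv]
    refine mul_le_mul_of_nonneg_left ?_ (by positivity)
    rw [← Finset.add_sum_erase _ _ (Finset.mem_univ k)]
    rw [add_le_iff_nonpos_right]
    refine Finset.sum_nonpos fun m hm => ?_
    refine mul_nonpos_of_nonneg_of_nonpos (hb m) ?_
    rcases lt_or_gt_of_ne (Finset.ne_of_mem_erase hm) with hmk | hmk
    · simp only [hi m hmk, if_false]
      split_ifs <;> norm_num
    · simp only [hj m hmk, if_true]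
      split_ifs <;> norm_num
  by_cases hks : h k = s
  · subst hks
    obtain ⟨i, hik, hi⟩ : ∃ i ∈ h k, ∀ m < k, i ∉ h m := by
      by_cases h0 : (k : ℕ) = 0
      · obtain ⟨i, hi⟩ := Finset.card_pos.1 hs
        exact ⟨i, hi, fun m hm => absurd (Fin.lt_def.1 hm) (by omega)⟩
      · let k' : Fin n := ⟨k - 1, by omega⟩
        obtain ⟨i, hi, hi'⟩ := Finset.exists_mem_notMem_of_card_lt_card
          (s := h k') (t := h k) (by rw [hh.1, hh.1]; simp [k']; omega)
        refine ⟨i, hi, fun m hm hmi => hi' (hh.2 m k' ?_ hmi)⟩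
        rw [Fin.le_def]
        have := Fin.lt_def.1 hm
        simp [k']; omega
    obtain ⟨j, hjk, hj⟩ : ∃ j ∉ h k, ∀ m, k < m → j ∈ h m := by
      by_cases h0 : (k : ℕ) + 1 = n
      · obtain ⟨j, -, hj⟩ := Finset.exists_mem_notMem_of_card_lt_card
          (s := h k) (t := Finset.univ) (by rw [hh.1]; simp)
        exact ⟨j, hj, fun m hm => absurd (Fin.lt_def.1 hm) (by omega)⟩
      · let k' : Fin n := ⟨k + 1, by omega⟩
        obtain ⟨j, hj, hj'⟩ := Finset.exists_mem_notMem_of_card_lt_card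
          (s := h k) (t := h k') (by rw [hh.1, hh.1]; simp [k'])
        refine ⟨j, hj', fun m hm => hh.2 k' m ?_ hj⟩
        rw [Fin.le_def]
        exact Fin.lt_def.1 hm
    refine ⟨i, hik, j, hjk, (key i j hi hj).trans ?_⟩
    rw [coef_apply hh]
    simp [hik, hjk]
  · have hcard : (h k).card = s.card := by rw [hh.1, hk]
    have h1 : ¬ s ⊆ h k := fun hsub => hks (Finset.eq_of_subset_of_card_le hsub hcard.le).symm
    have h2 : ¬ h k ⊆ s := fun hsub => hks (Finset.eq_of_subset_of_card_le hsub hcard.ge)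
    obtain ⟨i, his, hik⟩ := Finset.not_subset.1 h1
    obtain ⟨j, hjk, hjs⟩ := Finset.not_subset.1 h2
    refine ⟨i, his, j, hjs, (key i j (fun m hm hi => hik (hh.2 m k hm.le hi))
      (fun m hm => hh.2 k m hm.le hjk)).trans ?_⟩
    refine mul_le_mul_of_nonneg_left ?_ (by positivity)
    have := hb k
    have := coef_nonneg (g := h) hb s
    simp [hik, hjk]
    linarith

/-- The coefficients of a point in the complete fan of flag cones are Lipschitz functions of
the point. -/
lemma coef_sub_le (hv : IsRegularSimplex v) (hg : IsFlag g) (hh : IsFlag h)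
    {b b' : Fin n → ℝ} (hb : ∀ k, 0 ≤ b k) (hb' : ∀ k, 0 ≤ b' k) (s : Finset (Fin (n + 1))) :
    coef g b s - coef h b' s ≤
      2 * ‖(∑ k, b k • vsum v (g k)) - ∑ k, b' k • vsum v (h k)‖ := by
  by_cases hs : ∃ k, g k = s
  · obtain ⟨k, rfl⟩ := hs
    obtain ⟨i, hi, j, hj, hij⟩ := exists_inner_le_coef (v := v) hv hh hb' (s := g k)
      (by rw [hg.1]; omega) (by rw [hg.1]; omega)
    have h1 := coef_le_inner hv hg hb k hi hj
    rw [coef_apply hg]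
    set q := ∑ k, b k • vsum v (g k)
    set q' := ∑ k, b' k • vsum v (h k)
    have h2 : ⟪v i - v j, q - q'⟫ ≤ 2 * ‖q - q'‖ := by
      refine (real_inner_le_norm _ _).trans ?_
      refine mul_le_mul_of_nonneg_right ?_ (norm_nonneg _)
      refine (norm_sub_le _ _).trans ?_
      rw [hv.1, hv.1]; norm_num
    rw [inner_sub_right] at h2
    have h3 : 0 ≤ 1 / (n : ℝ) := by positivity
    by_contra hlt
    push Not at hlt
    have h4 : 0 ≤ 2 * ‖q - q'‖ := by positivity
    nlinarith
  · push Not at hs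
    rw [coef_eq_zero b hs]
    have := coef_nonneg (g := h) hb' s
    have : 0 ≤ 2 * ‖(∑ k, b k • vsum v (g k)) - ∑ k, b' k • vsum v (h k)‖ := by positivity
    linarith

/-- A small perturbation of the rays of the fan of flag cones keeps it a fan: points of two
perturbed cones coincide only if their coefficients do. -/
lemma coef_eq_of_sum_eq (hv : IsRegularSimplex v) (hg : IsFlag g) (hh : IsFlag h)
    {b b' : Fin n → ℝ} (hb : ∀ k, 0 ≤ b k) (hb' : ∀ k, 0 ≤ b' k)
    {u : Finset (Fin (n + 1)) → Euc n} {η : ℝ} (hη : 2 ^ (n + 1) * 2 * η < 1)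
    (hu : ∀ s, ‖u s - vsum v s‖ ≤ η)
    (heq : ∑ k, b k • u (g k) = ∑ k, b' k • u (h k)) : coef g b = coef h b' := by
  set q := ∑ k, b k • vsum v (g k) with hq
  set q' := ∑ k, b' k • vsum v (h k) with hq'
  set S := ∑ s, |coef g b s - coef h b' s| with hS
  have h1 : ∀ s, |coef g b s - coef h b' s| ≤ 2 * ‖q - q'‖ := by
    intro s
    rw [abs_le]
    refine ⟨?_, coef_sub_le hv hg hh hb hb' s⟩
    have := coef_sub_le hv hh hg hb' hb s
    rw [norm_sub_rev] at this
    linarith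
  have h2 : S ≤ 2 ^ (n + 1) * (2 * ‖q - q'‖) := by
    have := Finset.sum_le_sum fun s (_ : s ∈ Finset.univ) => h1 s
    simpa using this
  have h3 : q - q' = -∑ s, (coef g b s - coef h b' s) • (u s - vsum v s) := by
    simp only [smul_sub, sub_smul, Finset.sum_sub_distrib, sum_coef_smul, heq]
    abel
  have h4 : ‖q - q'‖ ≤ η * S := by
    rw [h3, norm_neg, hS, Finset.mul_sum]
    refine (norm_sum_le _ _).trans (Finset.sum_le_sum fun s _ => ?_)
    rw [norm_smul, Real.norm_eq_abs, mul_comm]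
    exact mul_le_mul_of_nonneg_right (hu s) (abs_nonneg _)
  have h5 : 0 ≤ S := Finset.sum_nonneg fun s _ => abs_nonneg _
  have h6 : S = 0 := by
    have : (0 : ℝ) < 2 ^ (n + 1) := by positivity
    by_contra hne
    have hpos : 0 < S := lt_of_le_of_ne h5 (Ne.symm hne)
    have : 2 ^ (n + 1) * (2 * ‖q - q'‖) ≤ 2 ^ (n + 1) * (2 * (η * S)) := by gcongr
    nlinarith
  funext s
  have := (Finset.sum_eq_zero_iff_of_nonneg fun s _ => abs_nonneg _).1 h6 s (Finset.mem_univ s)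
  exact sub_eq_zero.1 (abs_eq_zero.1 this)

lemma linearIndependent_flag (hv : IsRegularSimplex v) (hg : IsFlag g)
    {u : Finset (Fin (n + 1)) → Euc n} {η : ℝ} (hη : 2 ^ (n + 1) * 2 * η < 1)
    (hu : ∀ s, ‖u s - vsum v s‖ ≤ η) : LinearIndependent ℝ (fun k => u (g k)) := by
  rw [Fintype.linearIndependent_iff]
  intro c hc k
  have h1 : ∑ k, max (c k) 0 • u (g k) = ∑ k, max (-c k) 0 • u (g k) := by
    rw [← sub_eq_zero, ← Finset.sum_sub_distrib, ← hc]
    refine Finset.sum_congr rfl fun k _ => ?_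
    rw [← sub_smul]
    congr 1
    rcases le_total (c k) 0 with h | h <;> simp [h]
  have h2 := coef_eq_of_sum_eq hv hg hg (fun k => le_max_right _ _) (fun k => le_max_right _ _)
    hη hu h1
  have h3 := congrFun h2 (g k)
  rw [coef_apply hg, coef_apply hg] at h3
  rcases le_total (c k) 0 with h | h <;> simp [h] at h3 <;> linarith

end Stability

/-! ### The volume of a flag polytope -/

/-- The determinant of `n` vectors in the standard basis of `Euc n`. -/
def edet (n : ℕ) : (Euc n) [⋀^Fin n]→ₗ[ℝ] ℝ := (EuclideanSpace.basisFun (Fin n) ℝ).toBasis.det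

/-- The flags of faces, as a finite set. -/
def flags (n : ℕ) : Finset (Fin n → Finset (Fin (n + 1))) :=
  open Classical in Finset.univ.filter IsFlag

/-- The corner simplex spanned by the origin and the standard basis. -/
def corner (n : ℕ) : Set (Euc n) :=
  convexHull ℝ (insert 0 (Set.range (EuclideanSpace.basisFun (Fin n) ℝ).toBasis))

/-- The linear map sending the standard basis to the family `f`. -/
def toMap {n : ℕ} (f : Fin n → Euc n) : Euc n →ₗ[ℝ] Euc n :=
  (EuclideanSpace.basisFun (Fin n) ℝ).toBasis.constr ℝ f

section Volume

variable {n : ℕ} {v : Fin (n + 1) → Euc n}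

lemma mem_flags {g : Fin n → Finset (Fin (n + 1))} : g ∈ flags n ↔ IsFlag g := by
  simp [flags]

lemma toMap_apply (f : Fin n → Euc n) (p : Euc n) : toMap f p = ∑ k, p k • f k := by
  simp [toMap, Module.Basis.constr_apply_fintype]

lemma det_toMap (f : Fin n → Euc n) : LinearMap.det (toMap f) = edet n f := by
  have h := (EuclideanSpace.basisFun (Fin n) ℝ).toBasis.det_comp (toMap f)
    (EuclideanSpace.basisFun (Fin n) ℝ).toBasis
  rw [Module.Basis.det_self, mul_one] at h
  rw [← h, edet]
  congr 1
  funext k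
  simp only [toMap, Function.comp, Module.Basis.constr_basis]

lemma edet_ne_zero {f : Fin n → Euc n} (hf : LinearIndependent ℝ f) : edet n f ≠ 0 := by
  have := ((EuclideanSpace.basisFun (Fin n) ℝ).toBasis.is_basis_iff_det (v := f)).1
    ⟨hf, hf.span_eq_top_of_card_eq_finrank' (by simp)⟩
  exact this.ne_zero

lemma convexHull_eq_image (f : Fin n → Euc n) :
    convexHull ℝ (insert 0 (Set.range f)) = toMap f '' corner n := by
  rw [corner, LinearMap.image_convexHull, Set.image_insert_eq, map_zero, ← Set.range_comp]
  congr 3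
  funext k
  simp only [toMap, Function.comp, Module.Basis.constr_basis]

lemma corner_nonneg {p : Euc n} (hp : p ∈ corner n) (k : Fin n) : 0 ≤ p k := by
  have hsub : corner n ⊆ {p : Euc n | 0 ≤ p k} := by
    refine convexHull_min ?_ ?_
    · rintro _ (rfl | ⟨j, rfl⟩)
      · simp
      · simp
        split_ifs <;> norm_num
    · intro x hx y hy a b ha hb _
      simp only [Set.mem_ofPred_eq, PiLp.add_apply, PiLp.smul_apply, smul_eq_mul] at *
      positivity
  exact hsub hp

lemma isCompact_corner : IsCompact (corner n) :=
  Set.Finite.isCompact_convexHull (𝕜 := ℝ) ((Set.finite_range _).insert 0)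

lemma volume_coord_eq_zero (k : Fin n) : volume {p : Euc n | p k = 0} = 0 := by
  let S : Submodule ℝ (Euc n) := LinearMap.ker (EuclideanSpace.proj k : Euc n →L[ℝ] ℝ).toLinearMap
  have : {p : Euc n | p k = 0} = S := by
    ext p; simp [S]
  rw [this]
  refine Measure.addHaar_submodule _ _ fun h => ?_
  have h1 : EuclideanSpace.single k (1 : ℝ) ∈ S := by rw [h]; trivial
  simp [S] at h1

/-- The simplices of a perturbed flag polytope do not overlap, so its volume is the sum of
theirs, each a determinant. -/
lemma volume_flagPolytope (hv : IsRegularSimplex v) {a : ℕ → ℝ} (ha : ∀ k, 0 < a k)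
    {u : Finset (Fin (n + 1)) → Euc n} {η : ℝ} (hη : 2 ^ (n + 1) * 2 * η < 1)
    (hu : ∀ s, ‖u s - vsum v s‖ ≤ η) :
    (volume (flagPolytope fun s => a s.card • u s)).toReal =
      (∏ k : Fin n, a (k + 1)) * (volume (corner n)).toReal *
        ∑ g ∈ flags n, |edet n fun k => u (g k)| := by
  have hset : (flagPolytope fun s => a s.card • u s) =
      ⋃ g ∈ flags n, toMap (fun k : Fin n => a (g k).card • u (g k)) '' corner n := by
    simp only [flagPolytope, mem_flags, Set.mem_ofPred_eq, convexHull_eq_image]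
  have hdisj : Set.Pairwise (flags n : Set (Fin n → Finset (Fin (n + 1))))
      (Function.onFun (AEDisjoint volume)
        fun g => toMap (fun k : Fin n => a (g k).card • u (g k)) '' corner n) := by
    intro g hg h hh hne
    rw [Finset.mem_coe, mem_flags] at hg hh
    have hsub : (toMap (fun k : Fin n => a (g k).card • u (g k)) '' corner n) ∩
        (toMap (fun k : Fin n => a (h k).card • u (h k)) '' corner n) ⊆
        ⋃ k, toMap (fun k : Fin n => a (g k).card • u (g k)) '' {p : Euc n | p k = 0} := by
      rintro _ ⟨⟨p, hp, rfl⟩, ⟨q, hq, hpq⟩⟩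
      by_contra hcon
      simp only [Set.mem_iUnion, not_exists] at hcon
      have hp0 : ∀ k, p k ≠ 0 := fun k hk => hcon k ⟨p, hk, rfl⟩
      simp only [toMap_apply, smul_smul] at hpq
      have hc := coef_eq_of_sum_eq hv hg hh
        (b := fun k => p k * a (g k).card) (b' := fun k => q k * a (h k).card)
        (fun k => mul_nonneg (corner_nonneg hp k) (ha _).le)
        (fun k => mul_nonneg (corner_nonneg hq k) (ha _).le) hη hu hpq.symm
      apply hne
      funext k
      have hk := congrFun hc (g k)
      rw [coef_apply hg] at hk
      by_cases hex : ∃ m, h m = g k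
      · obtain ⟨m, hm⟩ := hex
        have h1 := hh.1 m
        rw [hm, hg.1] at h1
        have : k = m := Fin.ext (by omega)
        rw [this, hm, this]
      · push Not at hex
        rw [coef_eq_zero _ hex] at hk
        exact absurd hk (mul_ne_zero (hp0 k) (ha _).ne')
    refine measure_mono_null hsub ?_
    rw [measure_iUnion_null_iff]
    intro k
    rw [Measure.addHaar_image_linearMap, volume_coord_eq_zero, mul_zero]
  have hcompact : ∀ g : Fin n → Finset (Fin (n + 1)),
      IsCompact (toMap (fun k : Fin n => a (g k).card • u (g k)) '' corner n) := fun g =>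
    isCompact_corner.image (LinearMap.continuous_of_finiteDimensional _)
  rw [hset, measure_biUnion_finset₀ hdisj
    fun g _ => (hcompact g).measurableSet.nullMeasurableSet, ENNReal.toReal_sum
    fun g _ => (hcompact g).measure_lt_top.ne, Finset.mul_sum]
  refine Finset.sum_congr rfl fun g hg => ?_
  rw [mem_flags] at hg
  rw [Measure.addHaar_image_linearMap, ENNReal.toReal_mul, ENNReal.toReal_ofReal (abs_nonneg _),
    det_toMap]
  have : (fun k : Fin n => a (g k).card • u (g k)) = fun k : Fin n => a (k + 1) • u (g k) := by
    funext k; rw [hg.1]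
  rw [this, AlternatingMap.map_smul_univ, smul_eq_mul, abs_mul,
    abs_of_pos (Finset.prod_pos fun k _ => ha _)]
  ring

end Volume

/-! ### Cancellation of the first-order terms -/

section FirstOrder

variable {n : ℕ} {v : Fin (n + 1) → Euc n}

/-- The sign of the determinant of the vertex sums along a flag. -/
def flagSign (v : Fin (n + 1) → Euc n) (g : Fin n → Finset (Fin (n + 1))) : ℝ :=
  SignType.sign (edet n fun k => vsum v (g k))

/-- The sum, over all flags `g` with `g k = s`, of the signed determinants in which the
`k`-th vector is replaced by the argument. -/
def firstOrder (v : Fin (n + 1) → Euc n) (k : Fin n) (s : Finset (Fin (n + 1))) :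
    Euc n →ₗ[ℝ] ℝ :=
  ∑ g ∈ (flags n).filter (fun g => g k = s),
    flagSign v g • (edet n).toMultilinearMap.toLinearMap (fun m => vsum v (g m)) k

lemma firstOrder_apply (k : Fin n) (s : Finset (Fin (n + 1))) (z : Euc n) :
    firstOrder v k s z = ∑ g ∈ (flags n).filter (fun g => g k = s),
      flagSign v g * edet n (Function.update (fun m => vsum v (g m)) k z) := by
  simp [firstOrder]

/-- The reflection exchanging two vertices permutes the vertices. -/
lemma reflection_vertex (hv : IsRegularSimplex v) (a b i : Fin (n + 1)) :
    (ℝ ∙ (v a - v b))ᗮ.reflection (v i) = v (Equiv.swap a b i) := by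
  have hab : ‖v a‖ = ‖v b‖ := by rw [hv.1, hv.1]
  have h1 : (ℝ ∙ (v a - v b))ᗮ.reflection (v a) = v b := Submodule.reflection_sub hab
  rcases eq_or_ne i a with rfl | hia
  · rw [h1, Equiv.swap_apply_left]
  rcases eq_or_ne i b with rfl | hib
  · have h2 := congrArg (ℝ ∙ (v a - v i))ᗮ.reflection h1
    rw [Submodule.reflection_reflection] at h2
    rw [Equiv.swap_apply_right]
    exact h2.symm
  · rw [Equiv.swap_apply_of_ne_of_ne hia hib]
    refine Submodule.reflection_mem_subspace_eq_self ?_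
    rw [Submodule.mem_orthogonal_singleton_iff_inner_right, inner_sub_left,
      hv.2 a i hia.symm, hv.2 b i hib.symm, sub_self]

lemma reflection_vsum (hv : IsRegularSimplex v) (a b : Fin (n + 1)) (s : Finset (Fin (n + 1))) :
    (ℝ ∙ (v a - v b))ᗮ.reflection (vsum v s) =
      vsum v (s.map (Equiv.swap a b).toEmbedding) := by
  rw [vsum, map_sum, vsum, Finset.sum_map]
  exact Finset.sum_congr rfl fun i _ => reflection_vertex hv a b i

lemma abs_det_reflection (K : Submodule ℝ (Euc n)) :
    |LinearMap.det K.reflection.toLinearMap| = 1 := by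
  rw [Submodule.det_reflection, abs_pow, abs_neg, abs_one, one_pow]

lemma IsFlag.map {g : Fin n → Finset (Fin (n + 1))} (hg : IsFlag g)
    (σ : Equiv.Perm (Fin (n + 1))) : IsFlag fun m => (g m).map σ.toEmbedding :=
  ⟨fun k => by rw [Finset.card_map, hg.1], fun j k hjk => Finset.map_subset_map.2 (hg.2 j k hjk)⟩

/-- By the symmetry exchanging two vertices, the first-order functional of the face `s` takes the
same value at vertices that both lie in `s` or both lie outside `s`. -/
lemma firstOrder_vertex (hv : IsRegularSimplex v) (k : Fin n) (s : Finset (Fin (n + 1)))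
    (a b : Fin (n + 1)) (hab : a ∈ s ↔ b ∈ s) :
    firstOrder v k s (v a) = firstOrder v k s (v b) := by
  set R := (ℝ ∙ (v a - v b))ᗮ.reflection with hR
  set σ := Equiv.swap a b with hσ
  have hRa : v b = R (v a) := by rw [reflection_vertex hv, Equiv.swap_apply_left]
  have hmap : s.map σ.toEmbedding = s := by
    ext i
    rw [Finset.mem_map_equiv, hσ, Equiv.symm_swap]
    rcases eq_or_ne i a with rfl | hia
    · rw [Equiv.swap_apply_left, hab]
    rcases eq_or_ne i b with rfl | hib
    · rw [Equiv.swap_apply_right, hab]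
    · rw [Equiv.swap_apply_of_ne_of_ne hia hib]
  have hinv : ∀ t : Finset (Fin (n + 1)),
      (t.map σ.toEmbedding).map σ.toEmbedding = t := by
    intro t
    ext i
    simp [Finset.mem_map_equiv, hσ]
  have hcomp : ∀ f : Fin n → Euc n,
      edet n (fun m => R (f m)) = LinearMap.det R.toLinearMap * edet n f := fun f =>
    (EuclideanSpace.basisFun (Fin n) ℝ).toBasis.det_comp R.toLinearMap f
  rw [firstOrder_apply, firstOrder_apply]
  refine Finset.sum_nbij' (fun g m => (g m).map σ.toEmbedding)
    (fun g m => (g m).map σ.toEmbedding) ?_ ?_ ?_ ?_ ?_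
  · intro g hg
    rw [Finset.mem_filter, mem_flags] at hg ⊢
    exact ⟨hg.1.map σ, by simp only [hg.2, hmap]⟩
  · intro g hg
    rw [Finset.mem_filter, mem_flags] at hg ⊢
    exact ⟨hg.1.map σ, by simp only [hg.2, hmap]⟩
  · intro g _; funext m; exact hinv _
  · intro g _; funext m; exact hinv _
  · intro g _
    have hupd : Function.update (fun m => vsum v ((g m).map σ.toEmbedding)) k (v b) =
        fun m => R (Function.update (fun m => vsum v (g m)) k (v a) m) := by
      funext m
      rcases eq_or_ne m k with rfl | hm
      · simp [hRa]
      · simp only [Function.update_of_ne hm]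
        rw [reflection_vsum hv]
    have hsign : flagSign v (fun m => (g m).map σ.toEmbedding) =
        SignType.sign (LinearMap.det R.toLinearMap) * flagSign v g := by
      rw [flagSign, flagSign]
      have hg' : ∀ m, vsum v ((g m).map σ.toEmbedding) = R (vsum v (g m)) :=
        fun m => (reflection_vsum hv a b _).symm
      simp only [hg']
      rw [hcomp, sign_mul]
      push_cast
      rfl
    rw [hupd, hcomp, hsign]
    have h1 := sign_mul_self (LinearMap.det R.toLinearMap)
    rw [abs_det_reflection] at h1
    linear_combination (-(flagSign v g *
      edet n (Function.update (fun m => vsum v (g m)) k (v a)))) * h1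

/-- The tight frame expansion of `z` splits into the vertices in `s` and those outside `s`; on each
part the functional is constant and the frame coefficients add up to zero. -/
lemma firstOrder_eq_zero (hn : 0 < n) (hv : IsRegularSimplex v) (k : Fin n)
    (s : Finset (Fin (n + 1))) (z : Euc n) (hz : ⟪vsum v s, z⟫ = 0) :
    firstOrder v k s z = 0 := by
  have h1 : ∑ i ∈ s, ⟪v i, z⟫ = 0 := by rw [← hz, vsum, sum_inner]
  have h2 : ∑ i ∈ sᶜ, ⟪v i, z⟫ = 0 := by
    have := Finset.sum_add_sum_compl s fun i => ⟪v i, z⟫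
    rw [sum_inner_vertex hn hv] at this
    linarith
  have hvan : ∀ t : Finset (Fin (n + 1)), (∀ i ∈ t, ∀ j ∈ t, (i ∈ s ↔ j ∈ s)) →
      ∑ i ∈ t, ⟪v i, z⟫ = 0 → ∑ i ∈ t, ⟪v i, z⟫ * firstOrder v k s (v i) = 0 := by
    intro t ht h0
    rcases t.eq_empty_or_nonempty with rfl | ⟨a, ha⟩
    · simp
    · rw [Finset.sum_congr rfl fun i hi => by
        rw [firstOrder_vertex hv k s i a (ht i hi a ha)], ← Finset.sum_mul, h0, zero_mul]
  have h3 : firstOrder v k s ((1 + 1 / (n : ℝ)) • z) = 0 := by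
    rw [frame_vertex hn hv, map_sum]
    simp only [map_smul, smul_eq_mul]
    rw [← Finset.sum_add_sum_compl s, hvan s (fun i hi j hj => by simp [hi, hj]) h1,
      hvan sᶜ (fun i hi j hj => by rw [Finset.mem_compl] at hi hj; simp [hi, hj]) h2, add_zero]
  rw [map_smul, smul_eq_mul] at h3
  have : (1 + 1 / (n : ℝ)) ≠ 0 := by positivity
  exact (mul_eq_zero.1 h3).resolve_left this

lemma sum_linearDeriv_eq_zero (hn : 0 < n) (hv : IsRegularSimplex v)
    (z : Finset (Fin (n + 1)) → Euc n) (hz : ∀ s, ⟪vsum v s, z s⟫ = 0) :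
    ∑ g ∈ flags n, flagSign v g * (edet n).toMultilinearMap.linearDeriv
      (fun k => vsum v (g k)) (fun k => z (g k)) = 0 := by
  simp only [MultilinearMap.linearDeriv_apply, Finset.mul_sum]
  rw [Finset.sum_comm]
  refine Finset.sum_eq_zero fun k _ => ?_
  rw [← Finset.sum_fiberwise (flags n) (fun g => g k)]
  refine Finset.sum_eq_zero fun s _ => ?_
  rw [← firstOrder_eq_zero hn hv k s (z s) (hz s), firstOrder_apply]
  refine Finset.sum_congr rfl fun g hg => ?_
  rw [(Finset.mem_filter.1 hg).2]
  rfl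

end FirstOrder

/-! ### The second-order estimate -/

section SecondOrder

variable {n : ℕ} {v : Fin (n + 1) → Euc n}

lemma continuous_edet : Continuous (edet n) := by
  have : (edet n : (Fin n → Euc n) → ℝ) =
      fun f => Matrix.det (Matrix.of fun i j => f j i) := by
    funext f
    rw [edet, Module.Basis.det_apply]
    congr 1
  rw [this]
  refine Continuous.matrix_det ?_
  fun_prop

lemma norm_vsum_le (hv : IsRegularSimplex v) (s : Finset (Fin (n + 1))) :
    ‖vsum v s‖ ≤ n + 1 := by
  refine (norm_sum_le _ _).trans ?_
  simp only [hv.1, Finset.sum_const, nsmul_eq_mul, mul_one]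
  have := s.card_le_univ
  rw [Fintype.card_fin] at this
  exact_mod_cast this

/-- Near the unperturbed configuration the determinants along flags keep their signs. -/
lemma exists_sign_stable (hv : IsRegularSimplex v) :
    ∃ η > 0, ∀ u : Finset (Fin (n + 1)) → Euc n, (∀ s, ‖u s - vsum v s‖ < η) →
      ∀ g ∈ flags n, |edet n fun k => u (g k)| = flagSign v g * edet n fun k => u (g k) := by
  have h1 : ∀ᶠ u : Finset (Fin (n + 1)) → Euc n in nhds (vsum v), ∀ g ∈ flags n,
      0 < edet n (fun k => vsum v (g k)) * edet n (fun k => u (g k)) := by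
    rw [Filter.eventually_all_finset]
    intro g hg
    have hc : Continuous fun u : Finset (Fin (n + 1)) → Euc n =>
        edet n (fun k => vsum v (g k)) * edet n (fun k => u (g k)) :=
      continuous_const.mul (continuous_edet.comp (by fun_prop))
    refine hc.continuousAt.eventually (lt_mem_nhds ?_)
    have := edet_ne_zero (linearIndependent_flag (η := 0) hv (mem_flags.1 hg) (u := vsum v)
      (by norm_num) (by simp))
    exact mul_self_pos.2 this
  obtain ⟨η, hη, h2⟩ := Metric.eventually_nhds_iff.1 h1
  refine ⟨η, hη, fun u hu g hg => ?_⟩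
  have h3 := h2 ((dist_pi_lt_iff hη).2 fun s => by rw [dist_eq_norm]; exact hu s) g hg
  rw [flagSign]
  rcases lt_or_gt_of_ne (left_ne_zero_of_mul h3.ne') with h | h
  · rw [abs_of_neg (by nlinarith), sign_neg h]; simp
  · rw [abs_of_pos (by nlinarith), sign_pos h]; simp

lemma abs_flagSign_le (g : Fin n → Finset (Fin (n + 1))) : |flagSign v g| ≤ 1 := by
  rw [flagSign]
  rcases lt_trichotomy (edet n fun k => vsum v (g k)) 0 with h | h | h <;> simp [h]

/-- Multilinearity bounds the second-order part of the expansion of the determinant. -/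
lemma exists_second_order_bound (n : ℕ) (B : ℝ) (hB : 0 ≤ B) : ∃ C > 0, ∀ (ε : ℝ),
    0 ≤ ε → ε ≤ 1 → ∀ c e e' : Fin n → Euc n, (∀ k, ‖c k‖ ≤ B) → (∀ k, ‖e k‖ ≤ B * ε) →
      (∀ k, ‖e' k‖ ≤ B * ε) →
      |edet n (c + e) - edet n (c + e') - (edet n).toMultilinearMap.linearDeriv c (e - e')|
        ≤ C * ε ^ 2 := by
  obtain ⟨C₀, hC₀, hbd⟩ := (edet n).toMultilinearMap.exists_bound_of_continuous continuous_edet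
  refine ⟨2 ^ n * (2 * (C₀ * B ^ n)) + 1, by positivity, ?_⟩
  intro ε hε hε1 c e e' hc he he'
  have hterm : ∀ f : Fin n → Euc n, (∀ k, ‖f k‖ ≤ B * ε) → ∀ A : Finset (Fin n), 2 ≤ A.card →
      |edet n (A.piecewise f c)| ≤ C₀ * B ^ n * ε ^ 2 := by
    intro f hf A hA
    refine (hbd _).trans ?_
    rw [mul_assoc]
    refine mul_le_mul_of_nonneg_left ?_ hC₀.le
    calc ∏ i, ‖A.piecewise f c i‖ ≤ ∏ i, B * (if i ∈ A then ε else 1) := by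
          refine Finset.prod_le_prod (fun i _ => norm_nonneg _) fun i _ => ?_
          by_cases hi : i ∈ A
          · simpa [hi] using hf i
          · simpa [hi] using hc i
      _ = B ^ n * ε ^ A.card := by
          rw [Finset.prod_mul_distrib, Finset.prod_ite]
          simp
      _ ≤ B ^ n * ε ^ 2 := by
          refine mul_le_mul_of_nonneg_left ?_ (by positivity)
          exact pow_le_pow_of_le_one hε hε1 hA
  have hexp := (edet n).toMultilinearMap.map_add_sub_map_add_sub_linearDeriv c e e'
  simp only [AlternatingMap.coe_multilinearMap] at hexp
  rw [hexp]
  refine (Finset.abs_sum_le_sum_abs _ _).trans ?_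
  calc ∑ A : Finset (Fin n) with 2 ≤ A.card,
        |edet n (A.piecewise e c) - edet n (A.piecewise e' c)|
      ≤ ∑ A : Finset (Fin n) with 2 ≤ A.card, 2 * (C₀ * B ^ n) * ε ^ 2 := by
        refine Finset.sum_le_sum fun A hA => ?_
        have hA' := (Finset.mem_filter.1 hA).2
        refine (abs_sub _ _).trans ?_
        have := hterm e he A hA'
        have := hterm e' he' A hA'
        linarith
    _ ≤ ∑ A : Finset (Fin n), 2 * (C₀ * B ^ n) * ε ^ 2 :=
        Finset.sum_le_sum_of_subset_of_nonneg (Finset.filter_subset _ _)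
          fun _ _ _ => by positivity
    _ = 2 ^ n * (2 * (C₀ * B ^ n)) * ε ^ 2 := by
        simp; ring
    _ ≤ _ := by nlinarith [sq_nonneg ε]

/-- Displacements orthogonal to the rays change the volume only to second order. The factors
`a s.card` accommodate the centroids of the faces and of the dual faces. -/
lemma volume_flagPolytope_sub_le (hn : 0 < n) (hv : IsRegularSimplex v) {a : ℕ → ℝ}
    (ha : ∀ k, 0 < a k) : ∃ ε₀ > 0, ∃ C > 0, ∀ ε, 0 ≤ ε → ε < ε₀ →
      ∀ (t : Finset (Fin (n + 1)) → ℝ) (z : Finset (Fin (n + 1)) → Euc n),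
      (∀ s, |t s - 1| ≤ ε) → (∀ s, ‖z s‖ ≤ ε) → (∀ s, ⟪vsum v s, z s⟫ = 0) →
      |(volume (flagPolytope fun s => a s.card • (t s • vsum v s + z s))).toReal -
        (volume (flagPolytope fun s => a s.card • (t s • vsum v s))).toReal| ≤ C * ε ^ 2 := by
  obtain ⟨η, hη, hsign⟩ := exists_sign_stable hv
  obtain ⟨C₀, hC₀, hbd⟩ := exists_second_order_bound n (n + 2) (by positivity)
  set K := (∏ k : Fin n, a (k + 1)) * (volume (corner n)).toReal with hK
  have hK0 : 0 ≤ K := mul_nonneg (Finset.prod_nonneg fun k _ => (ha _).le) ENNReal.toReal_nonneg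
  set η' := min (min η (1 / 2 ^ (n + 3))) 1 with hη'
  have hη'0 : 0 < η' := lt_min (lt_min hη (by positivity)) one_pos
  refine ⟨η' / (n + 2), by positivity, K * ((flags n).card * C₀) + 1, by positivity, ?_⟩
  intro ε hε hεη t z ht hz hperp
  have hεη2 : (n + 2) * ε < η' := by
    rw [lt_div_iff₀ (by positivity)] at hεη
    linarith
  have hε1 : ε ≤ 1 := by
    have : η' ≤ 1 := min_le_right _ _
    nlinarith [(Nat.cast_nonneg n : (0 : ℝ) ≤ n)]
  have hη1 : (n + 2) * ε < η := hεη2.trans_le ((min_le_left _ _).trans (min_le_left _ _))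
  have hη2 : 2 ^ (n + 1) * 2 * ((n + 2) * ε) < 1 := by
    have h1 : (n + 2) * ε < 1 / 2 ^ (n + 3) :=
      hεη2.trans_le ((min_le_left _ _).trans (min_le_right _ _))
    have h2 : (0 : ℝ) < 2 ^ (n + 3) := by positivity
    rw [lt_div_iff₀ h2] at h1
    have h3 : (2 : ℝ) ^ (n + 3) = 2 * (2 ^ (n + 1) * 2) := by ring
    rw [h3] at h1
    have h4 : 0 ≤ 2 ^ (n + 1) * 2 * ((n + 2) * ε) := by positivity
    nlinarith
  have he' : ∀ s, ‖t s • vsum v s - vsum v s‖ ≤ (n + 1) * ε := by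
    intro s
    rw [show t s • vsum v s - vsum v s = (t s - 1) • vsum v s by rw [sub_smul, one_smul],
      norm_smul, Real.norm_eq_abs, mul_comm]
    exact mul_le_mul (norm_vsum_le hv s) (ht s) (abs_nonneg _) (by positivity)
  have he : ∀ s, ‖t s • vsum v s + z s - vsum v s‖ ≤ (n + 2) * ε := by
    intro s
    rw [show t s • vsum v s + z s - vsum v s = (t s • vsum v s - vsum v s) + z s by abel]
    refine (norm_add_le _ _).trans ?_
    linarith [he' s, hz s]
  have he'' : ∀ s, ‖t s • vsum v s - vsum v s‖ ≤ (n + 2) * ε := fun s => by linarith [he' s]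
  rw [volume_flagPolytope hv ha hη2 he, volume_flagPolytope hv ha hη2 he'', ← hK, ← mul_sub,
    abs_mul, abs_of_nonneg hK0, ← Finset.sum_sub_distrib]
  have hrem : ∑ g ∈ flags n, (|edet n fun k => t (g k) • vsum v (g k) + z (g k)| -
        |edet n fun k => t (g k) • vsum v (g k)|) =
      ∑ g ∈ flags n, flagSign v g * ((edet n fun k => t (g k) • vsum v (g k) + z (g k)) -
        (edet n fun k => t (g k) • vsum v (g k)) -
        (edet n).toMultilinearMap.linearDeriv (fun k => vsum v (g k)) fun k => z (g k)) := by
    have h0 := sum_linearDeriv_eq_zero hn hv z hperp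
    rw [← sub_zero (Finset.sum _ _), ← h0, ← Finset.sum_sub_distrib]
    refine Finset.sum_congr rfl fun g hg => ?_
    rw [hsign _ (fun s => (he s).trans_lt hη1) g hg,
      hsign _ (fun s => (he'' s).trans_lt hη1) g hg]
    ring
  rw [hrem]
  have hsum : |∑ g ∈ flags n,
      flagSign v g * ((edet n fun k => t (g k) • vsum v (g k) + z (g k)) -
        (edet n fun k => t (g k) • vsum v (g k)) -
        (edet n).toMultilinearMap.linearDeriv (fun k => vsum v (g k)) fun k => z (g k))| ≤
      (flags n).card * C₀ * ε ^ 2 := by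
    refine (Finset.abs_sum_le_sum_abs _ _).trans ?_
    rw [mul_assoc, ← nsmul_eq_mul]
    refine Finset.sum_le_card_nsmul _ _ _ fun g _ => ?_
    rw [abs_mul]
    refine (mul_le_of_le_one_left (abs_nonneg _) (abs_flagSign_le g)).trans ?_
    have h := hbd ε hε hε1 (fun k => vsum v (g k))
      (fun k => t (g k) • vsum v (g k) + z (g k) - vsum v (g k))
      (fun k => t (g k) • vsum v (g k) - vsum v (g k))
      (fun k => by linarith [norm_vsum_le hv (g k)]) (fun k => he _) (fun k => he'' _)
    have h1 : ((fun k => vsum v (g k)) +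
        fun k => t (g k) • vsum v (g k) + z (g k) - vsum v (g k)) =
        fun k => t (g k) • vsum v (g k) + z (g k) :=
      funext fun k => add_sub_cancel _ _
    have h2 : ((fun k => vsum v (g k)) + fun k => t (g k) • vsum v (g k) - vsum v (g k)) =
        fun k => t (g k) • vsum v (g k) :=
      funext fun k => add_sub_cancel _ _
    have h3 : ((fun k => t (g k) • vsum v (g k) + z (g k) - vsum v (g k)) -
        fun k => t (g k) • vsum v (g k) - vsum v (g k)) = fun k => z (g k) := by
      funext k
      rw [Pi.sub_apply]
      abel
    rwa [h1, h2, h3] at h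
  calc K * _ ≤ K * ((flags n).card * C₀ * ε ^ 2) := mul_le_mul_of_nonneg_left hsum hK0
    _ ≤ _ := by nlinarith [sq_nonneg ε]

end SecondOrder

/-! ### Tangency points -/

section Tangency

variable {n : ℕ} {v : Fin (n + 1) → Euc n}

lemma flagPolytope_congr {w w' : Finset (Fin (n + 1)) → Euc n}
    (h : ∀ s : Finset (Fin (n + 1)), 0 < s.card → s.card ≤ n → w s = w' s) :
    flagPolytope w = flagPolytope w' := by
  unfold flagPolytope
  refine Set.iUnion₂_congr fun g hg => ?_
  have : (fun k : Fin n => w (g k)) = fun k => w' (g k) := by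
    funext k
    exact h _ (by rw [hg.1]; omega) (by rw [hg.1]; omega)
  rw [this]

/-- Replacing each `w F`, a point within `O(δ)` of `t F • c F` in a direction orthogonal to the
centroid, by `t F • c F` changes the volume of the flag polytope only by `O(δ ^ 2)`. -/
lemma volume_sub_le_of_close (hn : 0 < n) (hv : IsRegularSimplex v) {a : ℕ → ℝ}
    (ha : ∀ k, 0 < k → k ≤ n → 1 / (n : ℝ) ≤ a k) {M : ℝ} (hM : 0 < M)
    {c : Finset (Fin (n + 1)) → Euc n}
    (hc : ∀ s : Finset (Fin (n + 1)), 0 < s.card → s.card ≤ n → c s = a s.card • vsum v s) :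
    ∃ δ₀ > 0, ∃ C > 0, ∀ δ, 0 < δ → δ < δ₀ →
      ∀ (t : Finset (Fin (n + 1)) → ℝ) (w : Finset (Fin (n + 1)) → Euc n),
      (∀ s : Finset (Fin (n + 1)), 0 < s.card → s.card ≤ n → |t s - 1| ≤ M * δ ∧
        ‖w s - t s • c s‖ ≤ M * δ ∧ ⟪vsum v s, w s - t s • c s⟫ = 0) →
      |(volume (flagPolytope w)).toReal - (volume (flagPolytope fun s => t s • c s)).toReal|
        ≤ C * δ ^ 2 := by
  have hn1 : (1 : ℝ) ≤ n := by exact_mod_cast hn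
  have hn0 : (0 : ℝ) < n := by linarith
  have ha0 : ∀ k, 0 < k → k ≤ n → 0 < a k := fun k h1 h2 =>
    (by positivity : (0 : ℝ) < 1 / n).trans_le (ha k h1 h2)
  obtain ⟨ε₀, hε₀, C, hC, hmain⟩ := volume_flagPolytope_sub_le hn hv
    (a := fun k => if 0 < k ∧ k ≤ n then a k else 1)
    (fun k => by
      split_ifs with h
      exacts [ha0 k h.1 h.2, one_pos])
  refine ⟨ε₀ / (n * M), by positivity, C * (n * M) ^ 2, by positivity, ?_⟩
  intro δ hδ hδ' t w h
  rw [lt_div_iff₀ (by positivity)] at hδ'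
  have hε : 0 ≤ n * M * δ := by positivity
  have key := hmain (n * M * δ) hε (by linarith)
    (fun s => if 0 < s.card ∧ s.card ≤ n then t s else 1)
    (fun s => if 0 < s.card ∧ s.card ≤ n then (a s.card)⁻¹ • (w s - t s • c s) else 0)
    (fun s => by
      split_ifs with hs
      · refine (h s hs.1 hs.2).1.trans ?_
        nlinarith [mul_pos hM hδ]
      · simpa using hε)
    (fun s => by
      split_ifs with hs
      · have h1 := ha s.card hs.1 hs.2
        have h2 := ha0 s.card hs.1 hs.2
        have h3 : (a s.card)⁻¹ ≤ n := by
          rw [inv_le_comm₀ h2 hn0]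
          simpa using h1
        rw [norm_smul, Real.norm_of_nonneg (inv_nonneg.2 h2.le), mul_assoc]
        exact mul_le_mul h3 (h s hs.1 hs.2).2.1 (norm_nonneg _) hn0.le
      · simpa using hε)
    (fun s => by
      split_ifs with hs
      · rw [inner_smul_right, (h s hs.1 hs.2).2.2, mul_zero]
      · exact inner_zero_right _)
  have hw := flagPolytope_congr (w' := w) (w := fun s : Finset (Fin (n + 1)) =>
      (if 0 < s.card ∧ s.card ≤ n then a s.card else 1) •
        ((if 0 < s.card ∧ s.card ≤ n then t s else 1) • vsum v s +
          if 0 < s.card ∧ s.card ≤ n then (a s.card)⁻¹ • (w s - t s • c s) else 0))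
    (fun s h1 h2 => by
      have h3 := ha0 s.card h1 h2
      simp only [h1, h2, and_self, if_true]
      rw [smul_add, smul_inv_smul₀ h3.ne', hc s h1 h2, smul_comm]
      abel)
  have hc' := flagPolytope_congr (w' := fun s => t s • c s)
    (w := fun s : Finset (Fin (n + 1)) => (if 0 < s.card ∧ s.card ≤ n then a s.card else 1) •
      (if 0 < s.card ∧ s.card ≤ n then t s else 1) • vsum v s)
    (fun s h1 h2 => by
      simp only [h1, h2, and_self, if_true]
      rw [hc s h1 h2, smul_comm])
  rw [hw, hc'] at key
  exact key.trans_eq (by ring)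

lemma inner_le_of_mem {y p : Euc n} {r : ℝ} (hp : p ∈ simplexHull v) (h : ∀ i, ⟪y, v i⟫ ≤ r) :
    ⟪y, p⟫ ≤ r := by
  have hsub : simplexHull v ⊆ {p | ⟪y, p⟫ ≤ r} := by
    refine convexHull_min ?_ ?_
    · rintro _ ⟨i, rfl⟩
      exact h i
    · intro p hp q hq a b ha hb hab
      simp only [Set.mem_ofPred_eq, inner_add_right, inner_smul_right] at *
      calc a * ⟪y, p⟫ + b * ⟪y, q⟫ ≤ a * r + b * r := by gcongr
        _ = r := by rw [← add_mul, hab, one_mul]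
  exact hsub hp

lemma centroidOf_eq (s : Finset (Fin (n + 1))) :
    centroidOf v s = (s.card : ℝ)⁻¹ • vsum v s := rfl

lemma centroidOf_mem {s : Finset (Fin (n + 1))} (hs : 0 < s.card) :
    centroidOf v s ∈ simplexHull v := by
  rw [centroidOf, Finset.smul_sum]
  refine (convex_convexHull ℝ _).sum_mem (fun _ _ => by positivity) ?_
    fun i _ => subset_convexHull ℝ _ ⟨i, rfl⟩
  have : (s.card : ℝ) ≠ 0 := by positivity
  simp [this]

lemma inner_centroidOf (hv : IsRegularSimplex v) {s : Finset (Fin (n + 1))} (hs : 0 < s.card)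
    (i : Fin (n + 1)) : ⟪v i, centroidOf v s⟫ =
      (s.card : ℝ)⁻¹ * (1 + 1 / (n : ℝ)) * (if i ∈ s then 1 else 0) - 1 / n := by
  have : (s.card : ℝ) ≠ 0 := by positivity
  rw [centroidOf_eq, inner_smul_right, inner_vsum hv]
  field_simp

lemma dualCentroid_eq (hn : 0 < n) (hv : IsRegularSimplex v) {s : Finset (Fin (n + 1))}
    (hs : 0 < s.card) (hs' : s.card ≤ n) :
    dualCentroid v s = ((n : ℝ) / (n + 1 - s.card)) • vsum v s := by
  have h1 : (s.card : ℝ) ≠ 0 := by positivity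
  have h2 : (n : ℝ) ≠ 0 := by positivity
  have h3 : (0 : ℝ) < n + 1 - s.card := by
    have : (s.card : ℝ) ≤ n := by exact_mod_cast hs'
    linarith
  have hnorm : ‖centroidOf v s‖ ^ 2 = (n + 1 - s.card) / (s.card * n) := by
    rw [← real_inner_self_eq_norm_sq]
    nth_rewrite 1 [centroidOf_eq]
    rw [inner_smul_left, vsum, sum_inner, Finset.sum_congr rfl fun i hi => by
      rw [inner_centroidOf hv hs, if_pos hi]]
    simp
    field_simp
  rw [dualCentroid, hnorm, centroidOf_eq, smul_smul]
  congr 1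
  field_simp

/-- The tangency point of a face is within `O(δ)` of `c_F`, at a displacement from `t • c_F`
orthogonal to it. The bound `t ≤ 1` holds because `∑ j ∉ s, ⟪v j, z⟫ = 0` for `z ⟂ F`. -/
lemma tangency_close (hn : 0 < n) (hv : IsRegularSimplex v) {δ : ℝ} (hδ : 0 < δ)
    {K : Set (Euc n)} (hK : IsConvexBody K) (hK1 : (1 - δ) • simplexHull v ⊆ K)
    (hK2 : K ⊆ simplexHull v) {s : Finset (Fin (n + 1))} (hs : 0 < s.card) (hs' : s.card ≤ n)
    {t : ℝ} {x : Euc n} (h : IsTangency (faceOf v s) (centroidOf v s) K t x) :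
    |t - 1| ≤ (n + 1) * n * 2 * δ ∧ ‖x - t • centroidOf v s‖ ≤ (n + 1) * n * 2 * δ ∧
      ⟪vsum v s, x - t • centroidOf v s⟫ = 0 := by
  obtain ⟨-, hx, hmem, hmax⟩ := h
  have hn1 : (1 : ℝ) ≤ n := by exact_mod_cast hn
  have hs1 : (1 : ℝ) ≤ s.card := by exact_mod_cast hs
  have hs2 : (s.card : ℝ) ≤ n := by exact_mod_cast hs'
  have hxK : x ∈ simplexHull v := hK2 (hK.1.isClosed.frontier_subset hx)
  obtain ⟨z, hz, rfl⟩ := hmem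
  simp only [vadd_eq_add] at *
  rw [add_sub_cancel_left]
  have hzs : ∀ i ∈ s, ⟪v i, z⟫ = 0 := fun i hi =>
    hz (v i) (subset_convexHull ℝ _ ⟨i, hi, rfl⟩)
  have hperp : ⟪vsum v s, z⟫ = 0 := by
    rw [vsum, sum_inner]
    exact Finset.sum_eq_zero hzs
  have hlow : ∀ j, -(1 / (n : ℝ)) ≤ ⟪v j, t • centroidOf v s + z⟫ := by
    intro j
    have := inner_le_of_mem (y := -v j) (r := 1 / (n : ℝ)) hxK (fun i => by
      rw [inner_neg_left, inner_vertex hv]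
      have : 0 ≤ 1 / (n : ℝ) := by positivity
      split_ifs <;> linarith)
    rw [inner_neg_left] at this
    linarith
  have ht1 : 1 - δ ≤ t := by
    refine hmax _ ⟨(1 - δ) • centroidOf v s, ⟨0, fun y _ => inner_zero_right _, ?_⟩, hK1 ?_⟩
    · simp
    · exact Set.smul_mem_smul_set (centroidOf_mem hs)
  have hout : ∀ j ∉ s, ⟪v j, z⟫ ≥ -(1 / (n : ℝ)) + t * (1 / n) := by
    intro j hj
    have := hlow j
    rw [inner_add_right, inner_smul_right, inner_centroidOf hv hs, if_neg hj] at this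
    linarith
  have hnn : 0 < 1 / (n : ℝ) := by positivity
  have hnn1 : 1 / (n : ℝ) ≤ 1 := by rw [div_le_one (by linarith)]; exact hn1
  have ht2 : t ≤ 1 := by
    have h1 : ∑ j ∈ sᶜ, ⟪v j, z⟫ = 0 := by
      have := Finset.sum_add_sum_compl s fun i => ⟪v i, z⟫
      rw [sum_inner_vertex hn hv, Finset.sum_eq_zero hzs, zero_add] at this
      exact this
    have h2 : (sᶜ.card : ℝ) * (-(1 / (n : ℝ)) + t * (1 / n)) ≤ ∑ j ∈ sᶜ, ⟪v j, z⟫ := by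
      rw [← nsmul_eq_mul]
      exact Finset.card_nsmul_le_sum _ _ _ fun j hj => hout j (Finset.mem_compl.1 hj)
    rw [h1] at h2
    have h3 : (0 : ℝ) < sᶜ.card := by
      rw [Finset.card_compl, Fintype.card_fin]
      exact_mod_cast (by omega : 0 < n + 1 - s.card)
    by_contra hlt
    push Not at hlt
    have h4 : 0 < -(1 / (n : ℝ)) + t * (1 / n) := by nlinarith
    nlinarith
  have hM : δ ≤ (n + 1) * n * δ := by
    have : 1 ≤ ((n : ℝ) + 1) * n := by nlinarith
    nlinarith
  refine ⟨?_, ?_, hperp⟩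
  · rw [abs_le]
    constructor <;> linarith
  · refine (norm_le_of_inner_ge hn hv z δ fun j => ?_).trans (by linarith)
    by_cases hj : j ∈ s
    · rw [hzs j hj]; linarith
    · have := hout j hj
      nlinarith

lemma isClosed_polarAt (K : Set (Euc n)) (z : Euc n) : IsClosed (polarAt K z) := by
  have : polarAt K z = ⋂ x ∈ K, {y | ⟪y, x - z⟫ ≤ 1} := by
    ext y; simp [polarAt]
  rw [this]
  exact isClosed_biInter fun x _ => isClosed_le (by fun_prop) continuous_const

/-- The analogue of `tangency_close` for a dual face; here `1 ≤ t ≤ 1 + 2 δ`, and the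
displacement satisfies upper instead of lower bounds. -/
lemma dual_tangency_close (hn : 0 < n) (hv : IsRegularSimplex v) {δ : ℝ} (hδ : 0 < δ)
    (hδ' : δ ≤ 1 / 2) {K : Set (Euc n)} (hK1 : (1 - δ) • simplexHull v ⊆ K)
    (hK2 : K ⊆ simplexHull v) {s : Finset (Fin (n + 1))} (hs : 0 < s.card) (hs' : s.card ≤ n)
    {t : ℝ} {x : Euc n}
    (h : IsTangency (dualFace v s) (dualCentroid v s) (polarAt K 0) t x) :
    |t - 1| ≤ (n + 1) * n * 2 * δ ∧ ‖x - t • dualCentroid v s‖ ≤ (n + 1) * n * 2 * δ ∧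
      ⟪vsum v s, x - t • dualCentroid v s⟫ = 0 := by
  obtain ⟨-, hx, hmem, hmax⟩ := h
  have hn1 : (1 : ℝ) ≤ n := by exact_mod_cast hn
  have hn0 : (n : ℝ) ≠ 0 := by positivity
  have hs1 : (1 : ℝ) ≤ s.card := by exact_mod_cast hs
  have hs2 : (s.card : ℝ) ≤ n := by exact_mod_cast hs'
  have hns : (n : ℝ) + 1 - s.card ≠ 0 := by linarith
  have hxK : x ∈ polarAt K 0 := (isClosed_polarAt K 0).frontier_subset hx
  have hdc : ∀ i, ⟪v i, dualCentroid v s⟫ =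
      if i ∈ s then 1 else -(s.card / ((n : ℝ) + 1 - s.card)) := by
    intro i
    rw [dualCentroid_eq hn hv hs hs', inner_smul_right, inner_vsum hv]
    split_ifs
    · field_simp
    · field_simp; ring
  obtain ⟨z, hz, rfl⟩ := hmem
  simp only [vadd_eq_add] at *
  rw [add_sub_cancel_left]
  -- the vertices of the dual face are the points `-n • v j` with `j ∉ s`
  have hzs : ∀ j ∉ s, ⟪v j, z⟫ = 0 := by
    intro j hj
    have h1 : -(n : ℝ) • v j ∈ dualFace v s := by
      refine ⟨fun p hp => ?_, fun p hp => ?_⟩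
      · rw [sub_zero]
        refine inner_le_of_mem hp fun i => ?_
        rw [inner_smul_left, inner_vertex hv]
        simp only [conj_trivial]
        split_ifs
        · field_simp; linarith
        · field_simp; norm_num
      · have hsub : faceOf v s ⊆ {p | ⟪p, -(n : ℝ) • v j⟫ = 1} := by
          refine convexHull_min ?_ ?_
          · rintro _ ⟨i, hi, rfl⟩
            have hij : i ≠ j := fun h => hj (h ▸ hi)
            simp only [Set.mem_ofPred_eq]
            rw [inner_smul_right, inner_vertex hv, if_neg hij]
            field_simp; ring
          · intro p hp q hq a b _ _ hab
            simp only [Set.mem_ofPred_eq, inner_add_left, inner_smul_left, conj_trivial] at *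
            rw [hp, hq, mul_one, mul_one, hab]
        exact hsub hp
    have h2 := hz _ h1
    rw [inner_smul_left] at h2
    simp only [conj_trivial] at h2
    exact (mul_eq_zero.1 h2).resolve_left (neg_ne_zero.2 hn0)
  have hperp : ⟪vsum v s, z⟫ = 0 := by
    have := Finset.sum_add_sum_compl s fun i => ⟪v i, z⟫
    rw [sum_inner_vertex hn hv, Finset.sum_eq_zero (s := sᶜ) fun j hj =>
      hzs j (Finset.mem_compl.1 hj), add_zero] at this
    rw [vsum, sum_inner, this]
  have hup : ∀ j, ⟪v j, t • dualCentroid v s + z⟫ ≤ 1 + 2 * δ := by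
    intro j
    have h1 := hxK ((1 - δ) • v j)
      (hK1 (Set.smul_mem_smul_set (subset_convexHull ℝ _ ⟨j, rfl⟩)))
    rw [sub_zero, inner_smul_right, real_inner_comm] at h1
    by_contra hlt
    push Not at hlt
    nlinarith
  have ht1 : 1 ≤ t := by
    refine hmax _ ⟨dualCentroid v s, ⟨0, fun y _ => inner_zero_right _, by simp⟩, fun p hp => ?_⟩
    rw [sub_zero]
    refine inner_le_of_mem (hK2 hp) fun i => ?_
    rw [real_inner_comm, hdc]
    have : 0 ≤ (s.card : ℝ) / ((n : ℝ) + 1 - s.card) := div_nonneg (by linarith) (by linarith)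
    split_ifs <;> linarith
  have hin : ∀ j ∈ s, ⟪v j, z⟫ ≤ 1 + 2 * δ - t := by
    intro j hj
    have := hup j
    rw [inner_add_right, inner_smul_right, hdc, if_pos hj] at this
    linarith
  have ht2 : t ≤ 1 + 2 * δ := by
    have h2 : ∑ j ∈ s, ⟪v j, z⟫ ≤ s.card * (1 + 2 * δ - t) := by
      rw [← nsmul_eq_mul]
      exact Finset.sum_le_card_nsmul _ _ _ hin
    rw [← sum_inner, ← vsum, hperp] at h2
    by_contra hlt
    push Not at hlt
    nlinarith
  have hM : δ ≤ (n + 1) * n * δ := by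
    have : 1 ≤ ((n : ℝ) + 1) * n := by nlinarith
    nlinarith
  refine ⟨?_, ?_, hperp⟩
  · rw [abs_le]
    constructor <;> linarith
  · rw [← norm_neg]
    refine (norm_le_of_inner_ge hn hv (-z) (2 * δ) fun j => ?_).trans (by linarith)
    rw [inner_neg_right]
    by_cases hj : j ∈ s
    · linarith [hin j hj]
    · rw [hzs j hj]; linarith

end Tangency

/-- The volumes of the polytopes `P, Q` (resp. `P', Q'`) built from the tangency
points `x_F, y_F` (resp. `x_F^*, y_F^*`) over all flags differ only by a
square-order error: `|vol P − vol Q| ≤ C₁δ²` and `|vol P' − vol Q'| ≤ C₂δ²`. -/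
theorem volume_P_Q_square_close (n : ℕ) (hn : 0 < n) (v : Fin (n + 1) → Euc n)
    (hv : IsRegularSimplex v) :
    ∃ δ₀ > 0, ∃ C₁ > 0, ∃ C₂ > 0, ∀ (δ : ℝ) (K : Set (Euc n))
      (tp td : Finset (Fin (n + 1)) → ℝ) (x xd : Finset (Fin (n + 1)) → Euc n),
      0 < δ → δ < δ₀ → IsConvexBody K →
      (1 - δ) • simplexHull v ⊆ K → K ⊆ simplexHull v →
      (∀ s : Finset (Fin (n + 1)), 0 < s.card → s.card ≤ n →
        IsTangency (faceOf v s) (centroidOf v s) K (tp s) (x s) ∧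
        IsTangency (dualFace v s) (dualCentroid v s) (polarAt K 0) (td s) (xd s)) →
      |(volume (flagPolytope x)).toReal -
          (volume (flagPolytope fun s => tp s • centroidOf v s)).toReal| ≤ C₁ * δ ^ 2 ∧
      |(volume (flagPolytope xd)).toReal -
          (volume (flagPolytope fun s => td s • dualCentroid v s)).toReal| ≤ C₂ * δ ^ 2 := by
  have hn1 : (1 : ℝ) ≤ n := by exact_mod_cast hn
  have hM : (0 : ℝ) < (n + 1) * n * 2 := by positivity
  obtain ⟨δ₁, hδ₁, C₁, hC₁, h₁⟩ := volume_sub_le_of_close hn hv (a := fun k => (k : ℝ)⁻¹)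
    (fun k hk hkn => by
      rw [one_div]
      exact inv_anti₀ (by positivity) (by exact_mod_cast hkn)) hM (c := centroidOf v)
    (fun s _ _ => centroidOf_eq s)
  obtain ⟨δ₂, hδ₂, C₂, hC₂, h₂⟩ := volume_sub_le_of_close hn hv
    (a := fun k => (n : ℝ) / (n + 1 - k))
    (fun k hk hkn => by
      have h1 : (1 : ℝ) ≤ k := by exact_mod_cast hk
      have h2 : (k : ℝ) ≤ n := by exact_mod_cast hkn
      rw [div_le_div_iff₀ (by linarith) (by linarith)]
      nlinarith) hM (c := dualCentroid v)
    (fun s hs hs' => dualCentroid_eq hn hv hs hs')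
  refine ⟨min (min δ₁ δ₂) (1 / 2), lt_min (lt_min hδ₁ hδ₂) (by norm_num), C₁, hC₁, C₂, hC₂, ?_⟩
  intro δ K tp td x xd hδ hδ' hK hK1 hK2 h
  have hδ1 : δ < δ₁ := hδ'.trans_le ((min_le_left _ _).trans (min_le_left _ _))
  have hδ2 : δ < δ₂ := hδ'.trans_le ((min_le_left _ _).trans (min_le_right _ _))
  have hδ3 : δ ≤ 1 / 2 := (hδ'.trans_le (min_le_right _ _)).le
  exact ⟨h₁ δ hδ hδ1 tp x fun s hs hs' =>
      tangency_close hn hv hδ hK hK1 hK2 hs hs' (h s hs hs').1,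
    h₂ δ hδ hδ2 td xd fun s hs hs' =>
      dual_tangency_close hn hv hδ hδ3 hK1 hK2 hs hs' (h s hs hs').2⟩
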